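/- The function f(x) = 2p(1 − x·p_s)/(3p + x·p_s·(1 − 3p)) is strictly decreasing on [0,1]; consequently, for every p_α ∈ [0,1), f(p_α) > f(1), i.e. the randomized stationary policy with sampling probability p_α < 1 has strictly higher time-averaged reconstruction error than the semantics-aware policy. (This is the first claim of the paper's Remark 1.) -/

import Mathlib

/-!
The error is a Möbius function `x ↦ (a * x + b) / (c * x + d)` with determinant
`a * d - b * c = -2 * p * ps < 0`, so it decreases wherever its denominator is positive. On
`[0, 1]` the denominator is the convex combination of `3 * p` and `1` with weight `x * ps`.
-/

section OrderedField

variable {K : Type*} [Field K] [LinearOrder K] [IsStrictOrderedRing K]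

theorem strictAntiOn_mul_add_div_mul_add {a b c d : K} (hdet : a * d < b * c) :
    StrictAntiOn (fun x ↦ (a * x + b) / (c * x + d)) {x | 0 < c * x + d} := by
  intro x hx y hy hxy
  have hcross : (a * y + b) * (c * x + d) < (a * x + b) * (c * y + d) := by
    linear_combination mul_pos (sub_pos.2 hdet) (sub_pos.2 hxy)
  exact (div_lt_div_iff₀ hy hx).2 hcross

theorem add_mul_one_sub_pos {a t : K} (ha : 0 < a) (ht : t ∈ Set.Icc 0 1) :
    0 < a + t * (1 - a) := by
  have hmem : AffineMap.lineMap a 1 t ∈ Set.Ioi (0 : K) :=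
    (convex_Ioi 0).lineMap_mem ha one_pos ht
  rw [AffineMap.lineMap_apply_ring, Set.mem_Ioi] at hmem
  linear_combination hmem

theorem Icc_subset_error_denominator_pos {p ps : K} (hp : 0 < p) (hps : ps ∈ Set.Icc 0 1) :
    Set.Icc 0 1 ⊆ {x | 0 < 3 * p + x * ps * (1 - 3 * p)} := fun _ hx ↦
  add_mul_one_sub_pos (mul_pos three_pos hp)
    ⟨mul_nonneg hx.1 hps.1, mul_le_one₀ hx.2 hps.1 hps.2⟩

theorem stmt_11_general {p ps : K} (hp : 0 < p) (hps : 0 < ps) {f : K → K}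
    (hf : ∀ x, f x = 2 * p * (1 - x * ps) / (3 * p + x * ps * (1 - 3 * p))) :
    StrictAntiOn f {x | 0 < 3 * p + x * ps * (1 - 3 * p)} := by
  have hdet : -(2 * p * ps) * (3 * p) < 2 * p * (ps * (1 - 3 * p)) := by
    linear_combination 2 * mul_pos hp hps
  have hnum (x : K) : 2 * p * (1 - x * ps) = -(2 * p * ps) * x + 2 * p := by ring
  have hden (x : K) : 3 * p + x * ps * (1 - 3 * p) = ps * (1 - 3 * p) * x + 3 * p := by ring
  simpa only [funext hf, hnum, hden] using strictAntiOn_mul_add_div_mul_add hdet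

end OrderedField

/-- First claim of Remark 1 of the paper: for the three-state symmetric DTMC source, the
time-averaged reconstruction error under the randomized stationary policy is strictly
decreasing in the sampling probability, so any sampling probability p_α < 1 yields
strictly higher error than the semantics-aware policy (which attains f(1)). -/
theorem stmt_11 (p ps : ℝ) (hp : 0 < p) (hp' : p ≤ 1 / 2) (hps : 0 < ps) (hps' : ps ≤ 1)
    (f : ℝ → ℝ)
    (hf : ∀ x, f x = 2 * p * (1 - x * ps) / (3 * p + x * ps * (1 - 3 * p))) :
    StrictAntiOn f (Set.Icc 0 1) ∧ ∀ pa ∈ Set.Ico (0 : ℝ) 1, f 1 < f pa := by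
  have hanti : StrictAntiOn f (Set.Icc 0 1) :=
    (stmt_11_general hp hps hf).mono (Icc_subset_error_denominator_pos hp ⟨hps.le, hps'⟩)
  exact ⟨hanti, fun _ hpa ↦
    hanti (Set.Ico_subset_Icc_self hpa) (Set.right_mem_Icc.2 zero_le_one) hpa.2⟩
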